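/- arXiv:2303.02991 — 2 statements merged into one kernel-verified Lean document; each statement's English description precedes it below -/
import Mathlib

section
/- Let X_0 and X_1 be real Banach spaces and ι : X_1 → X_0 a compact bounded linear operator. Fix κ ∈ [0, 1/2), L > 0, and let N be a natural number such that the image under ι of the closed unit ball of X_1 can be covered by N balls of radius (1−2κ)/(4L) in X_0. Let 𝔹 ⊆ X_0 be contained in the closed ball of radius R > 0 centered at a point x_0 ∈ 𝔹. For each n ∈ ℤ let U(n) : 𝔹 → 𝔹 be an admissible map, i.e. U(n) = ι∘C(n) + 𝓛(n) where C(n) : 𝔹 → X_1 is L-Lipschitz from the X_0-norm to the X_1-norm on 𝔹 and 𝓛(n) : 𝔹 → X_0 is κ-Lipschitz in the X_0-norm on 𝔹; for m ≥ n set U(m, n) := U(m−1)∘⋯∘U(n) (with U(n, n) = id). Then for every n ∈ ℤ and every integer k ≥ 1 there exists a finite set V_k(n) ⊆ U(n, n−k)(𝔹) with card V_k(n) ≤ N^k such that every point of U(n, n−k)(𝔹) lies within distance R·(κ + 1/2)^k (in X_0) of V_k(n). -/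
/-!
Suppose `V ⊆ S` is an `r`-net of `S`, and `U = ι ∘ C + 𝓛` is admissible. If `x ∈ S` lies within `r`
of `v ∈ V`, then `C x - C v` lies in the ball of radius `L * r`, whose image under `ι` is covered by
the balls of radius `L * r * ρ` around the rescaled centers `(L * r) • p`, while `𝓛 x` lies within
`κ * r` of `𝓛 v`. Hence the points `U v + (L * r) • p` form a `(κ + L * ρ) * r`-net of `U(S)`. They
need not lie in `U(S)`, and moving them there doubles the radius. Each iteration thus multiplies the
radius by `2 * (κ + L * ρ)`, which is `κ + 1/2` for `ρ = (1 - 2 * κ) / (4 * L)`, and the cardinality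
by the number of balls.
-/

open Metric Set
open scoped NNReal Pointwise

theorem isCover_iff_exists_dist_le {X : Type*} [PseudoMetricSpace X] {ε : ℝ≥0} {s V : Set X} :
    IsCover ε s V ↔ ∀ x ∈ s, ∃ v ∈ V, dist x v ≤ ε := by
  simp [isCover_iff_subset_iUnion_closedBall, subset_def]

theorem exists_finite_isCover_ncard_le {X : Type*} [PseudoEMetricSpace X] {ε : ℝ≥0} {s : Set X}
    {m : ℕ} (h : coveringNumber ε s ≤ m) :
    ∃ V ⊆ s, V.Finite ∧ V.ncard ≤ m ∧ IsCover ε s V := by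
  obtain ⟨V, hVs, hV, hcover, hcard⟩ :=
    exists_set_encard_eq_coveringNumber (ne_top_of_le_ne_top (ENat.natCast_ne_top m) h)
  refine ⟨V, hVs, hV, ?_, hcover⟩
  rwa [← hcard, ← hV.cast_ncard_eq, Nat.cast_le] at h

/-- The discrete process generated by a bi-infinite sequence of maps: `discreteProcess U n k` is
`U (n - 1) ∘ ⋯ ∘ U (n - k)`, which the paper writes `U(n, n - k)`. It is indexed by the final time
and the number of steps. -/
def discreteProcess {X : Type*} (U : ℤ → X → X) : ℤ → ℕ → X → X
  | _, 0 => id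
  | n, k + 1 => U (n - 1) ∘ discreteProcess U (n - 1) k

section DiscreteProcess

variable {X : Type*} {U : ℤ → X → X}

theorem eq_discreteProcess {Φ : ℤ → ℕ → X → X} (hΦ₀ : ∀ n, Φ n 0 = id)
    (hΦ : ∀ n k, Φ n (k + 1) = U (n - 1) ∘ Φ (n - 1) k) : Φ = discreteProcess U := by
  funext n k
  induction k generalizing n with
  | zero => exact hΦ₀ n
  | succ k ih => rw [hΦ, ih, discreteProcess]

theorem mapsTo_discreteProcess {s : Set X} (hU : ∀ n, MapsTo (U n) s s) (n : ℤ) (k : ℕ) :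
    MapsTo (discreteProcess U n k) s s := by
  induction k generalizing n with
  | zero => exact mapsTo_id s
  | succ k ih => exact (hU _).comp (ih _)

end DiscreteProcess

section Admissible

variable {E F : Type*} [SeminormedAddCommGroup E] [NormedSpace ℝ E]
  [NormedAddCommGroup F] [NormedSpace ℝ F]

theorem isCover_image_closedBall_smul {f : F →ₗ[ℝ] E} {ρ : ℝ≥0} {P : Set E}
    (hP : IsCover ρ (f '' closedBall 0 1) P) (c : ℝ≥0) :
    IsCover (c * ρ) (f '' closedBall 0 c) ((c : ℝ) • P) := by
  have hball : f '' closedBall 0 c = ((c : ℝ) • ·) '' (f '' closedBall 0 1) := by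
    rw [← smul_unitClosedBall_of_nonneg c.coe_nonneg, image_smul_set, image_smul]
  rw [hball]
  exact hP.image_lipschitz (by simpa using lipschitzWith_smul (c : ℝ))

/-- The admissible maps of the theory of exponential attractors: on `s`, the map `T` is the sum of
`f ∘ C`, where `C` is `L`-Lipschitz into the smoother space `F`, and a `κ`-Lipschitz map `D`. The
linear map `f` stands for the paper's embedding `ι`, and `D` for its `𝓛`. -/
def IsAdmissibleOn (f : F →ₗ[ℝ] E) (L κ : ℝ≥0) (T : E → E) (s : Set E) : Prop :=
  ∃ (C : E → F) (D : E → E),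
    LipschitzOnWith L C s ∧ LipschitzOnWith κ D s ∧ EqOn T (fun x ↦ f (C x) + D x) s

namespace IsAdmissibleOn

variable {f : F →ₗ[ℝ] E} {L κ ρ r : ℝ≥0} {T : E → E} {s P V : Set E}

theorem mono {t : Set E} (hT : IsAdmissibleOn f L κ T t) (hst : s ⊆ t) :
    IsAdmissibleOn f L κ T s :=
  let ⟨C, D, hC, hD, hCD⟩ := hT
  ⟨C, D, hC.mono hst, hD.mono hst, hCD.mono hst⟩

theorem isCover_image (hT : IsAdmissibleOn f L κ T s) (hP : IsCover ρ (f '' closedBall 0 1) P)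
    (hVs : V ⊆ s) (hV : IsCover r s V) :
    IsCover ((κ + L * ρ) * r) (T '' s) (image2 (fun v q ↦ T v + q) V ((L * r : ℝ) • P)) := by
  obtain ⟨C, D, hC, hD, hCD⟩ := hT
  rw [isCover_iff_exists_dist_le] at hV ⊢
  rintro _ ⟨x, hx, rfl⟩
  obtain ⟨v, hv, hxv⟩ := hV x hx
  have hCxv : C x - C v ∈ closedBall 0 ((L * r : ℝ≥0) : ℝ) := by
    rw [mem_closedBall_zero_iff, ← dist_eq_norm]
    grw [hC.dist_le_mul x hx v (hVs hv), hxv, NNReal.coe_mul]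
  obtain ⟨q, hq, hfq⟩ := isCover_iff_exists_dist_le.1
    (isCover_image_closedBall_smul hP (L * r)) _ (mem_image_of_mem f hCxv)
  refine ⟨T v + q, mem_image2_of_mem hv hq, ?_⟩
  calc dist (T x) (T v + q)
      = ‖(f (C x - C v) - q) + (D x - D v)‖ := by
        simp only [hCD hx, hCD (hVs hv), dist_eq_norm, map_sub]; congr 1; abel
    _ ≤ dist (f (C x - C v)) q + dist (D x) (D v) := by
        simpa only [dist_eq_norm] using norm_add_le _ _
    _ ≤ L * r * ρ + κ * r := by
        grw [hfq, hD.dist_le_mul x hx v (hVs hv), hxv]; simp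
    _ = ((κ + L * ρ) * r : ℝ≥0) := by push_cast; ring

theorem coveringNumber_image_le (hT : IsAdmissibleOn f L κ T s)
    (hP : IsCover ρ (f '' closedBall 0 1) P) :
    coveringNumber (2 * (κ + L * ρ) * r) (T '' s) ≤ coveringNumber r s * P.encard := by
  have hP₀ : P.encard ≠ 0 :=
    encard_ne_zero.2 <| hP.nonempty ((nonempty_closedBall.2 zero_le_one).image f)
  obtain htop | htop := eq_or_ne (coveringNumber r s) ⊤
  · simp [htop, ENat.top_mul hP₀]
  obtain ⟨V, hVs, -, hV, hcard⟩ := exists_set_encard_eq_coveringNumber htop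
  calc coveringNumber (2 * (κ + L * ρ) * r) (T '' s)
      ≤ externalCoveringNumber ((κ + L * ρ) * r) (T '' s) := by
        rw [mul_assoc]; exact coveringNumber_two_mul_le_externalCoveringNumber _ _
    _ ≤ (image2 (fun v q ↦ T v + q) V ((L * r : ℝ) • P)).encard :=
        (hT.isCover_image hP hVs hV).externalCoveringNumber_le_encard
    _ ≤ (V ×ˢ ((L * r : ℝ) • P)).encard := by
        rw [← image_prod]; exact encard_image_le _ _
    _ ≤ coveringNumber r s * P.encard := by
        rw [encard_prod, hcard]; exact mul_le_mul' le_rfl (encard_image_le _ _)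

theorem coveringNumber_image_discreteProcess_le {U : ℤ → E → E}
    (hU : ∀ n, IsAdmissibleOn f L κ (U n) s) (hUs : ∀ n, MapsTo (U n) s s)
    (hP : IsCover ρ (f '' closedBall 0 1) P) {x₀ : E} (hx₀ : x₀ ∈ s) (hs : s ⊆ closedBall x₀ r)
    (n : ℤ) (k : ℕ) :
    coveringNumber ((2 * (κ + L * ρ)) ^ k * r) (discreteProcess U n k '' s) ≤ P.encard ^ k := by
  induction k generalizing n with
  | zero =>
    have hcover : IsCover r s {x₀} := isCover_iff_subset_iUnion_closedBall.2 (by simpa using hs)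
    simpa [discreteProcess] using hcover.coveringNumber_le_encard (singleton_subset_iff.2 hx₀)
  | succ k ih =>
    have himage : discreteProcess U (n - 1) k '' s ⊆ s :=
      (mapsTo_discreteProcess hUs _ _).image_subset
    rw [discreteProcess, image_comp, pow_succ', mul_assoc, pow_succ]
    grw [((hU (n - 1)).mono himage).coveringNumber_image_le hP, ih]

end IsAdmissibleOn

end Admissible

theorem exists_nets_of_discrete_process_general
    {X₀ X₁ : Type*} [SeminormedAddCommGroup X₀] [NormedSpace ℝ X₀]
    [NormedAddCommGroup X₁] [NormedSpace ℝ X₁] (ι : X₁ →ₗ[ℝ] X₀)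
    {κ L ρ : ℝ} (hκ : 0 ≤ κ) (hL : 0 ≤ L) {N : ℕ} {y : Fin N → X₀}
    (hN : ι '' closedBall 0 1 ⊆ ⋃ i, closedBall (y i) ρ)
    {R : ℝ} {x₀ : X₀} {𝔹 : Set X₀} (hx₀ : x₀ ∈ 𝔹) (h𝔹 : 𝔹 ⊆ closedBall x₀ R)
    {U : ℤ → X₀ → X₀} (hU𝔹 : ∀ n, MapsTo (U n) 𝔹 𝔹) {C : ℤ → X₀ → X₁} {𝓛 : ℤ → X₀ → X₀}
    (hU : ∀ n, ∀ x ∈ 𝔹, U n x = ι (C n x) + 𝓛 n x)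
    (hC : ∀ n, ∀ ξ₁ ∈ 𝔹, ∀ ξ₂ ∈ 𝔹, ‖C n ξ₁ - C n ξ₂‖ ≤ L * ‖ξ₁ - ξ₂‖)
    (h𝓛 : ∀ n, ∀ ξ₁ ∈ 𝔹, ∀ ξ₂ ∈ 𝔹, ‖𝓛 n ξ₁ - 𝓛 n ξ₂‖ ≤ κ * ‖ξ₁ - ξ₂‖)
    (n : ℤ) (k : ℕ) :
    ∃ V : Set X₀, V ⊆ discreteProcess U n k '' 𝔹 ∧ V.Finite ∧ V.ncard ≤ N ^ k ∧
      ∀ x ∈ discreteProcess U n k '' 𝔹, ∃ v ∈ V, ‖x - v‖ ≤ R * (2 * (κ + L * ρ)) ^ k := by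
  obtain ⟨i, hi⟩ := mem_iUnion.1 (hN ⟨0, by simp, rfl⟩)
  lift κ to ℝ≥0 using hκ
  lift L to ℝ≥0 using hL
  lift ρ to ℝ≥0 using nonempty_closedBall.1 ⟨_, hi⟩
  lift R to ℝ≥0 using nonempty_closedBall.1 ⟨_, h𝔹 hx₀⟩
  have hadm (n : ℤ) : IsAdmissibleOn ι L κ (U n) 𝔹 :=
    ⟨C n, 𝓛 n, .of_dist_le_mul (by simpa only [dist_eq_norm] using hC n),
      .of_dist_le_mul (by simpa only [dist_eq_norm] using h𝓛 n), hU n⟩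
  have hcover : IsCover ρ (ι '' closedBall 0 1) (range y) :=
    isCover_iff_subset_iUnion_closedBall.2 (by simpa only [biUnion_range] using hN)
  have hrange : (range y).encard ≤ N := by
    simpa [← image_univ, encard_univ] using encard_image_le y univ
  have hnum :
      coveringNumber ((2 * (κ + L * ρ)) ^ k * R) (discreteProcess U n k '' 𝔹) ≤ (N ^ k : ℕ) := by
    grw [IsAdmissibleOn.coveringNumber_image_discreteProcess_le hadm hU𝔹 hcover hx₀ h𝔹, hrange,
      Nat.cast_pow]
  obtain ⟨V, hVU, hV, hcard, hVcover⟩ := exists_finite_isCover_ncard_le hnum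
  refine ⟨V, hVU, hV, hcard, ?_⟩
  simpa [dist_eq_norm, mul_comm] using isCover_iff_exists_dist_le.1 hVcover

/-- Existence of the nets `V_k(n)`.  Under the admissible-decomposition
assumptions on the discrete processes `U(n) : 𝔹 → 𝔹`, for every `n ∈ ℤ` and `k ≥ 1` the set
`U(n, n-k)(𝔹)` (i.e. `Ucomp n k '' 𝔹`, where `Ucomp n k = U(n-1) ∘ ⋯ ∘ U(n-k)`) admits an
`R·(κ + 1/2)^k`-net `V_k(n)` of cardinality at most `N^k` consisting of points of
`U(n, n-k)(𝔹)`. -/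
theorem exists_nets_of_discrete_process
    (X₀ X₁ : Type*) [NormedAddCommGroup X₀] [NormedSpace ℝ X₀] [CompleteSpace X₀]
    [NormedAddCommGroup X₁] [NormedSpace ℝ X₁] [CompleteSpace X₁]
    (ι : X₁ →L[ℝ] X₀) (hι : IsCompactOperator ι)
    (κ L : ℝ) (hκ0 : 0 ≤ κ) (hκ : κ < 1/2) (hL : 0 < L)
    (N : ℕ) (y : Fin N → X₀)
    (hN : ι '' Metric.closedBall 0 1 ⊆ ⋃ i, Metric.closedBall (y i) ((1 - 2*κ)/(4*L)))
    (R : ℝ) (hR : 0 < R) (x₀ : X₀) (𝔹 : Set X₀) (hx₀ : x₀ ∈ 𝔹)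
    (h𝔹 : 𝔹 ⊆ Metric.closedBall x₀ R)
    (U : ℤ → X₀ → X₀) (hU𝔹 : ∀ n, ∀ x ∈ 𝔹, U n x ∈ 𝔹)
    (C : ℤ → X₀ → X₁) (𝓛 : ℤ → X₀ → X₀)
    (hU : ∀ n, ∀ x ∈ 𝔹, U n x = ι (C n x) + 𝓛 n x)
    (hC : ∀ n, ∀ ξ₁ ∈ 𝔹, ∀ ξ₂ ∈ 𝔹, ‖C n ξ₁ - C n ξ₂‖ ≤ L * ‖ξ₁ - ξ₂‖)
    (h𝓛 : ∀ n, ∀ ξ₁ ∈ 𝔹, ∀ ξ₂ ∈ 𝔹, ‖𝓛 n ξ₁ - 𝓛 n ξ₂‖ ≤ κ * ‖ξ₁ - ξ₂‖)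
    (Ucomp : ℤ → ℕ → X₀ → X₀)
    (hU0 : ∀ n, Ucomp n 0 = id)
    (hUsucc : ∀ n k, Ucomp n (k + 1) = U (n - 1) ∘ Ucomp (n - 1) k) :
    ∀ (n : ℤ) (k : ℕ), 1 ≤ k →
      ∃ V : Set X₀, V ⊆ Ucomp n k '' 𝔹 ∧ V.Finite ∧ V.ncard ≤ N ^ k ∧
        ∀ x ∈ Ucomp n k '' 𝔹, ∃ v ∈ V, ‖x - v‖ ≤ R * (κ + 1/2) ^ k := by
  obtain rfl := eq_discreteProcess hU0 hUsucc
  have hrate : κ + 1 / 2 = 2 * (κ + L * ((1 - 2 * κ) / (4 * L))) := by field_simp; ring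
  exact fun n k _ ↦ hrate ▸ exists_nets_of_discrete_process_general ι.toLinearMap hκ0 hL.le hN hx₀
    h𝔹 hU𝔹 hU hC h𝓛 n k
end

section
/- Let E be a real normed space, let Σ be a set and Σ_0 ⊆ Σ a subset, and for each h ∈ Σ and each real t ≥ 0 let S_h^t : E → E be a map. Let P ⊆ E be a compact set. Assume: (i) P uniformly attracts bounded sets over Σ_0, i.e. for every bounded set B ⊆ E and every ε > 0 there exists T_0 ≥ 0 such that inf_{p∈P} ‖S_h^t x − p‖ ≤ ε for all t ≥ T_0, all h ∈ Σ_0, and all x ∈ B; (ii) for every h ∈ Σ, every t ≥ 0, and every x ∈ E there exists a sequence (h_n) in Σ_0 such that S_{h_n}^t x converges to S_h^t x in the weak topology of E. Then P uniformly attracts bounded sets over all of Σ: for every bounded set B ⊆ E and every ε > 0 there exists T ≥ 0 such that inf_{p∈P} ‖S_h^t x − p‖ ≤ ε for all t ≥ T, all h ∈ Σ, and all x ∈ B. -/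
/-!
A point is within distance `ε` of a nonempty set `P` if and only if it lies in `P + closedBall 0 δ`
for every `δ > ε`. Closed balls are convex, hence weakly closed, and the sum of a weakly compact set
and a weakly closed set is weakly closed. So the distance to a weakly compact set is weakly lower
semicontinuous, and a bound on it passes to weak limits at each fixed time: the time `T₀` that works
for the symbols in `Sig₀` works for all symbols.
-/

open Bornology Filter Metric Set Topology
open scoped Pointwise

section InfDist

variable {E : Type*} [SeminormedAddCommGroup E] {P : Set E}

lemma setOf_infDist_le_eq_iInter_add_closedBall (hP : P.Nonempty) (ε : ℝ) :
    {y | infDist y P ≤ ε} = ⋂ δ > ε, P + closedBall 0 δ := by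
  ext y
  simp only [mem_ofPred_eq, mem_iInter]
  constructor
  · intro hy δ hδ
    obtain ⟨p, hp, hyp⟩ := (infDist_lt_iff hP).1 (hy.trans_lt hδ)
    exact ⟨p, hp, y - p, by simpa [← dist_eq_norm] using hyp.le, add_sub_cancel p y⟩
  · refine fun hy ↦ le_of_forall_gt_imp_ge_of_dense fun δ hδ ↦ ?_
    obtain ⟨p, hp, v, hv, rfl⟩ := hy δ hδ
    calc infDist (p + v) P ≤ dist (p + v) p := infDist_le_dist_of_mem hp
      _ ≤ δ := by simpa using hv

end InfDist

section WeakTopology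

variable {α 𝕜 E : Type*} [CommSemiring 𝕜] [TopologicalSpace 𝕜] [ContinuousAdd 𝕜]
  [ContinuousConstSMul 𝕜 𝕜] [AddCommMonoid E] [Module 𝕜 E] [TopologicalSpace E]
  {l : Filter α} {u : α → E} {y : E}

lemma tendsto_toWeakSpace_iff :
    Tendsto (fun a ↦ toWeakSpace 𝕜 E (u a)) l (𝓝 (toWeakSpace 𝕜 E y)) ↔
      ∀ f : StrongDual 𝕜 E, Tendsto (fun a ↦ f (u a)) l (𝓝 (f y)) := by
  have h_inducing : IsInducing fun (z : WeakSpace 𝕜 E) (f : StrongDual 𝕜 E) ↦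
      f ((toWeakSpace 𝕜 E).symm z) := ⟨rfl⟩
  exact h_inducing.tendsto_nhds_iff.trans tendsto_pi_nhds

lemma toWeakSpace_mem_closure_image_of_tendsto [l.NeBot] {s : Set E} (hu : ∀ a, u a ∈ s)
    (hlim : ∀ f : StrongDual 𝕜 E, Tendsto (fun a ↦ f (u a)) l (𝓝 (f y))) :
    toWeakSpace 𝕜 E y ∈ closure (toWeakSpace 𝕜 E '' s) :=
  mem_closure_of_tendsto (tendsto_toWeakSpace_iff.2 hlim) <|
    .of_forall fun a ↦ mem_image_of_mem _ (hu a)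

end WeakTopology

section LocallyConvex

variable {𝕜 E : Type*} [RCLike 𝕜] [AddCommGroup E] [Module 𝕜 E] [Module ℝ E]
  [IsScalarTower ℝ 𝕜 E] [TopologicalSpace E] [IsTopologicalAddGroup E] [ContinuousSMul 𝕜 E]
  [LocallyConvexSpace ℝ E] {P C : Set E}

lemma isClosed_toWeakSpace_image_of_convex (hC : Convex ℝ C) (hC_closed : IsClosed C) :
    IsClosed (toWeakSpace 𝕜 E '' C) := by
  rw [← closure_eq_iff_isClosed, ← hC.toWeakSpace_closure 𝕜, hC_closed.closure_eq]

lemma isClosed_toWeakSpace_image_add_of_convex (hP : IsCompact (toWeakSpace 𝕜 E '' P))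
    (hC : Convex ℝ C) (hC_closed : IsClosed C) : IsClosed (toWeakSpace 𝕜 E '' (P + C)) := by
  rw [image_add]
  exact (isClosed_toWeakSpace_image_of_convex hC hC_closed).add_left_of_isCompact hP

end LocallyConvex

section WeaklyCompact

variable {𝕜 E : Type*} [RCLike 𝕜] [SeminormedAddCommGroup E] [NormedSpace 𝕜 E]
  [NormedSpace ℝ E] [IsScalarTower ℝ 𝕜 E] {P : Set E}

theorem lowerSemicontinuous_infDist_toWeakSpace_symm (hP : IsCompact (toWeakSpace 𝕜 E '' P)) :
    LowerSemicontinuous fun y ↦ infDist ((toWeakSpace 𝕜 E).symm y) P := by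
  obtain rfl | hne := P.eq_empty_or_nonempty
  · simpa only [infDist_empty] using lowerSemicontinuous_const
  refine lowerSemicontinuous_iff_isClosed_preimage.2 fun ε ↦ ?_
  have h_sublevel : (fun y ↦ infDist ((toWeakSpace 𝕜 E).symm y) P) ⁻¹' Iic ε =
      ⋂ δ > ε, toWeakSpace 𝕜 E '' (P + closedBall 0 δ) := by
    simp only [LinearEquiv.image_eq_preimage_symm, ← preimage_iInter₂,
      ← setOf_infDist_le_eq_iInter_add_closedBall hne]
    rfl
  rw [h_sublevel]
  exact isClosed_biInter fun δ _ ↦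
    isClosed_toWeakSpace_image_add_of_convex hP (convex_closedBall 0 δ) isClosed_closedBall

lemma infDist_le_of_toWeakSpace_mem_closure (hP : IsCompact (toWeakSpace 𝕜 E '' P)) {s : Set E}
    {ε : ℝ} (hs : ∀ z ∈ s, infDist z P ≤ ε) {y : E}
    (hy : toWeakSpace 𝕜 E y ∈ closure (toWeakSpace 𝕜 E '' s)) : infDist y P ≤ ε := by
  have h_sublevel_closed := (lowerSemicontinuous_infDist_toWeakSpace_symm hP).isClosed_preimage ε
  refine closure_minimal ?_ h_sublevel_closed hy
  rintro _ ⟨z, hz, rfl⟩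
  exact hs z hz

end WeaklyCompact

/-- The set `P` uniformly attracts bounded sets over the symbols in `Sig`: the trajectories
`S h t x` with `h ∈ Sig` and `x` in a bounded set are within `ε > 0` of `P` from a time on that
depends only on the bounded set and `ε`. Initial data may live in a space `X` other than `E`. -/
def UniformlyAttractsBounded {H X E : Type*} [Bornology X] [PseudoMetricSpace E]
    (S : H → ℝ → X → E) (Sig : Set H) (P : Set E) : Prop :=
  ∀ B : Set X, IsBounded B → ∀ ε : ℝ, 0 < ε →
    ∃ T : ℝ, 0 ≤ T ∧ ∀ t : ℝ, T ≤ t → ∀ h ∈ Sig, ∀ x ∈ B, infDist (S h t x) P ≤ ε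

theorem uniform_attraction_extends_to_weak_closure_general {𝕜 H X E : Type*} [RCLike 𝕜]
    [Bornology X] [SeminormedAddCommGroup E] [NormedSpace 𝕜 E] [NormedSpace ℝ E]
    [IsScalarTower ℝ 𝕜 E] {S : H → ℝ → X → E} {Sig₀ Sig : Set H} {P : Set E}
    (hP : IsCompact (toWeakSpace 𝕜 E '' P)) (hattr : UniformlyAttractsBounded S Sig₀ P)
    (happrox : ∀ h ∈ Sig, ∀ t : ℝ, 0 ≤ t → ∀ x : X,
      toWeakSpace 𝕜 E (S h t x) ∈ closure (toWeakSpace 𝕜 E '' ((S · t x) '' Sig₀))) :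
    UniformlyAttractsBounded S Sig P := by
  intro B hB ε hε
  obtain ⟨T₀, hT₀, hT₀_attr⟩ := hattr B hB ε hε
  refine ⟨T₀, hT₀, fun t ht h hh x hx ↦ ?_⟩
  have h_approximants : ∀ z ∈ (S · t x) '' Sig₀, infDist z P ≤ ε :=
    forall_mem_image.2 fun h₀ hh₀ ↦ hT₀_attr t ht h₀ hh₀ x hx
  exact infDist_le_of_toWeakSpace_mem_closure hP h_approximants (happrox h hh t (hT₀.trans ht) x)

/-- Let `P ⊆ E` be compact.  If `P` uniformly attracts bounded sets over a
subfamily `Sig₀` of symbols and every `S h t x` (for `h` in the full symbol family, `t ≥ 0`)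
is a weak limit of a sequence `S (hₙ) t x` with `hₙ ∈ Sig₀`, then `P` uniformly attracts
bounded sets over the full symbol family. -/
theorem uniform_attraction_extends_to_weak_closure
    (E : Type*) [NormedAddCommGroup E] [NormedSpace ℝ E]
    (H : Type*) (Sig₀ : Set H) (S : H → ℝ → E → E)
    (P : Set E) (hP : IsCompact P)
    (hattr : ∀ B : Set E, Bornology.IsBounded B → ∀ ε : ℝ, 0 < ε →
      ∃ T₀ : ℝ, 0 ≤ T₀ ∧ ∀ t : ℝ, T₀ ≤ t → ∀ h ∈ Sig₀, ∀ x ∈ B,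
        Metric.infDist (S h t x) P ≤ ε)
    (happrox : ∀ h : H, ∀ t : ℝ, 0 ≤ t → ∀ x : E,
      ∃ hseq : ℕ → H, (∀ n, hseq n ∈ Sig₀) ∧
        ∀ f : E →L[ℝ] ℝ,
          Filter.Tendsto (fun n => f (S (hseq n) t x)) Filter.atTop (nhds (f (S h t x)))) :
    ∀ B : Set E, Bornology.IsBounded B → ∀ ε : ℝ, 0 < ε →
      ∃ T : ℝ, 0 ≤ T ∧ ∀ t : ℝ, T ≤ t → ∀ h : H, ∀ x ∈ B,
        Metric.infDist (S h t x) P ≤ ε := by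
  simpa only [UniformlyAttractsBounded, mem_univ, true_imp_iff] using
    uniform_attraction_extends_to_weak_closure_general (Sig := univ)
      (hP.image (toWeakSpaceCLM ℝ E).continuous) hattr fun h _ t ht x ↦
        let ⟨_, hseq_mem, hseq_tendsto⟩ := happrox h t ht x
        toWeakSpace_mem_closure_image_of_tendsto
          (fun n ↦ mem_image_of_mem (S · t x) (hseq_mem n)) hseq_tendsto
end
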